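/- For all real numbers a ≥ 1 and γ > 0, one has 1 − Φ(a/(1+γ)) ≤ (1 − Φ(a))·exp(2a²γ), where Φ is the standard normal cumulative distribution function. -/

import Mathlib

noncomputable def gaussPDF (t : ℝ) : ℝ := (Real.sqrt (2 * Real.pi))⁻¹ * Real.exp (-t ^ 2 / 2)

noncomputable def Phi (t : ℝ) : ℝ := ∫ u in Set.Iic t, gaussPDF u

/-!
The hazard rate of the standard normal law obeys Birnbaum's bound
`φ(x) / (1 - Φ(x)) ≤ m(x) := (x + √(x² + 4)) / 2`. Indeed `m` is the positive root of
`m² = x m + 1`, and this relation gives `-(φ / m)' ≤ φ`; integrating over `(x, ∞)` yields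
`φ(x) / m(x) ≤ 1 - Φ(x)`. Since `m` is increasing, integrating the hazard rate over `[b, a]` gives
`1 - Φ(b) ≤ (1 - Φ(a)) exp (m(a) (a - b))`. For `b = a / (1 + γ)` one has `a - b ≤ a γ`, and
`m(a) ≤ 2 a` as soon as `a ≥ 1 / √2`.
-/

open Filter MeasureTheory Set
open scoped Topology

theorem hasDerivAt_integral_Iic {E : Type*} [NormedAddCommGroup E] [NormedSpace ℝ E]
    [CompleteSpace E] {f : ℝ → E} {x : ℝ} (hf : Integrable f) (hx : ContinuousAt f x) :
    HasDerivAt (fun t ↦ ∫ u in Iic t, f u) (f x) x := by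
  have h_split : (fun t ↦ ∫ u in Iic t, f u) =
      fun t ↦ (∫ u in Iic x, f u) + ∫ u in x..t, f u := by
    funext t
    rw [← intervalIntegral.integral_Iic_sub_Iic hf.integrableOn hf.integrableOn,
      add_sub_cancel]
  rw [h_split]
  exact (intervalIntegral.integral_hasDerivAt_right hf.intervalIntegrable
    hf.aestronglyMeasurable.stronglyMeasurableAtFilter hx).const_add _

theorem monotoneOn_mul_exp_of_hasDerivAt {f f' : ℝ → ℝ} {s : Set ℝ} {c : ℝ} (hs : Convex ℝ s)
    (hf : ∀ x ∈ s, HasDerivAt f (f' x) x) (hf' : ∀ x ∈ s, 0 ≤ f' x + c * f x) :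
    MonotoneOn (fun x ↦ f x * Real.exp (c * x)) s := by
  have h_deriv : ∀ x ∈ s, HasDerivAt (fun x ↦ f x * Real.exp (c * x))
      ((f' x + c * f x) * Real.exp (c * x)) x := fun x hx ↦
    ((hf x hx).mul ((hasDerivAt_id x).const_mul c).exp).congr_deriv (by simp only [id]; ring)
  refine monotoneOn_of_hasDerivWithinAt_nonneg hs
    (fun x hx ↦ (h_deriv x hx).continuousAt.continuousWithinAt)
    (fun x hx ↦ (h_deriv x (interior_subset hx)).hasDerivWithinAt) fun x hx ↦ ?_
  exact mul_nonneg (hf' x (interior_subset hx)) (Real.exp_pos _).le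

theorem gaussPDF_eq_gaussianPDFReal : gaussPDF = ProbabilityTheory.gaussianPDFReal 0 1 := by
  funext t
  simp [gaussPDF, ProbabilityTheory.gaussianPDFReal]

theorem gaussPDF_nonneg (x : ℝ) : 0 ≤ gaussPDF x := by
  unfold gaussPDF
  positivity

theorem integrable_gaussPDF : Integrable gaussPDF :=
  gaussPDF_eq_gaussianPDFReal ▸ ProbabilityTheory.integrable_gaussianPDFReal 0 1

theorem integral_gaussPDF : ∫ x, gaussPDF x = 1 :=
  gaussPDF_eq_gaussianPDFReal ▸ ProbabilityTheory.integral_gaussianPDFReal_eq_one 0 one_ne_zero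

theorem hasDerivAt_gaussPDF (x : ℝ) : HasDerivAt gaussPDF (-x * gaussPDF x) x := by
  have h_exponent : HasDerivAt (fun t : ℝ ↦ -t ^ 2 / 2) (-x) x :=
    ((hasDerivAt_pow 2 x).neg.div_const 2).congr_deriv (by push_cast; ring)
  exact (h_exponent.exp.const_mul (√(2 * Real.pi))⁻¹).congr_deriv (by unfold gaussPDF; ring)

theorem tendsto_gaussPDF_atTop : Tendsto gaussPDF atTop (𝓝 0) := by
  have h_exponent : Tendsto (fun t : ℝ ↦ -t ^ 2 / 2) atTop atBot :=
    (tendsto_neg_atTop_atBot.comp (tendsto_pow_atTop two_ne_zero)).atBot_div_const two_pos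
  rw [← mul_zero (√(2 * Real.pi))⁻¹]
  exact (Real.tendsto_exp_atBot.comp h_exponent).const_mul (√(2 * Real.pi))⁻¹

theorem hasDerivAt_Phi (x : ℝ) : HasDerivAt Phi (gaussPDF x) x :=
  hasDerivAt_integral_Iic integrable_gaussPDF (hasDerivAt_gaussPDF x).continuousAt

theorem tendsto_Phi_atTop : Tendsto Phi atTop (𝓝 1) :=
  integral_gaussPDF ▸
    (aecover_Iic tendsto_id).integral_tendsto_of_countably_generated integrable_gaussPDF

/-- Birnbaum's upper bound for the hazard rate `gaussPDF x / (1 - Phi x)` of the standard normal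
law: the positive root `m` of `m ^ 2 = x * m + 1`. -/
noncomputable def birnbaumBound (x : ℝ) : ℝ := (x + √(x ^ 2 + 4)) / 2

theorem birnbaumBound_sq (x : ℝ) : birnbaumBound x ^ 2 = x * birnbaumBound x + 1 := by
  have h_sqrt : √(x ^ 2 + 4) ^ 2 = x ^ 2 + 4 := Real.sq_sqrt (by positivity)
  unfold birnbaumBound
  linear_combination h_sqrt / 4

theorem abs_lt_sqrt_sq_add_four (x : ℝ) : |x| < √(x ^ 2 + 4) :=
  Real.lt_sqrt_of_sq_lt (by rw [sq_abs]; linarith)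

theorem birnbaumBound_pos (x : ℝ) : 0 < birnbaumBound x := by
  have h_lt := abs_lt_sqrt_sq_add_four x
  have h_neg := neg_abs_le x
  unfold birnbaumBound
  linarith

theorem le_birnbaumBound (x : ℝ) : x ≤ birnbaumBound x := by
  have h_lt := abs_lt_sqrt_sq_add_four x
  have h_le := le_abs_self x
  unfold birnbaumBound
  linarith

theorem birnbaumBound_le_sqrt (x : ℝ) : birnbaumBound x ≤ √(x ^ 2 + 4) := by
  have h_lt := abs_lt_sqrt_sq_add_four x
  have h_le := le_abs_self x
  unfold birnbaumBound
  linarith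

theorem tendsto_birnbaumBound_atTop : Tendsto birnbaumBound atTop atTop :=
  tendsto_atTop_mono le_birnbaumBound tendsto_id

theorem hasDerivAt_birnbaumBound (x : ℝ) :
    HasDerivAt birnbaumBound (birnbaumBound x / √(x ^ 2 + 4)) x := by
  have h_sqrt : HasDerivAt (fun t : ℝ ↦ √(t ^ 2 + 4)) (x / √(x ^ 2 + 4)) x :=
    (((hasDerivAt_pow 2 x).add_const 4).sqrt (by positivity)).congr_deriv (by
      push_cast
      field_simp)
  refine (((hasDerivAt_id x).add h_sqrt).div_const 2).congr_deriv ?_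
  unfold birnbaumBound
  field_simp
  ring

theorem monotone_birnbaumBound : Monotone birnbaumBound :=
  monotone_of_hasDerivAt_nonneg hasDerivAt_birnbaumBound fun x ↦
    div_nonneg (birnbaumBound_pos x).le (Real.sqrt_nonneg _)

theorem birnbaumBound_le_two_mul {x : ℝ} (hx : √2 / 2 ≤ x) : birnbaumBound x ≤ 2 * x := by
  have h_sq : 1 / 2 ≤ x ^ 2 := by
    calc (1 : ℝ) / 2 = (√2 / 2) ^ 2 := by rw [div_pow, Real.sq_sqrt zero_le_two]; norm_num
      _ ≤ x ^ 2 := pow_le_pow_left₀ (by positivity) hx 2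
  have hx_nonneg : 0 ≤ x := le_trans (by positivity) hx
  have h_sqrt : √(x ^ 2 + 4) ≤ 3 * x := Real.sqrt_le_iff.2 ⟨by positivity, by linarith⟩
  unfold birnbaumBound
  linarith

theorem hasDerivAt_gaussPDF_div_birnbaumBound (x : ℝ) :
    HasDerivAt (fun t ↦ gaussPDF t / birnbaumBound t)
      (-gaussPDF x * (x / birnbaumBound x + 1 / (birnbaumBound x * √(x ^ 2 + 4)))) x := by
  have h_pos := birnbaumBound_pos x
  refine ((hasDerivAt_gaussPDF x).div (hasDerivAt_birnbaumBound x) h_pos.ne').congr_deriv ?_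
  field_simp
  ring

theorem div_birnbaumBound_add_le_one (x : ℝ) :
    x / birnbaumBound x + 1 / (birnbaumBound x * √(x ^ 2 + 4)) ≤ 1 := by
  have h_pos := birnbaumBound_pos x
  calc x / birnbaumBound x + 1 / (birnbaumBound x * √(x ^ 2 + 4))
      ≤ x / birnbaumBound x + 1 / (birnbaumBound x * birnbaumBound x) := by
        gcongr
        exact birnbaumBound_le_sqrt x
    _ = (x * birnbaumBound x + 1) / birnbaumBound x ^ 2 := by field_simp
    _ = 1 := by rw [← birnbaumBound_sq, div_self (by positivity)]

theorem gaussPDF_div_birnbaumBound_le_one_sub_Phi (x : ℝ) :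
    gaussPDF x / birnbaumBound x ≤ 1 - Phi x := by
  have h_antitone : Antitone fun t ↦ 1 - Phi t - gaussPDF t / birnbaumBound t := by
    refine antitone_of_hasDerivAt_nonpos
      (fun t ↦ ((hasDerivAt_Phi t).const_sub 1).sub (hasDerivAt_gaussPDF_div_birnbaumBound t))
      fun t ↦ ?_
    rw [Pi.zero_apply]
    linarith [mul_le_of_le_one_right (gaussPDF_nonneg t) (div_birnbaumBound_add_le_one t)]
  have h_lim : Tendsto (fun t ↦ 1 - Phi t - gaussPDF t / birnbaumBound t) atTop (𝓝 0) := by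
    simpa only [sub_self] using (tendsto_Phi_atTop.const_sub 1).sub
      (tendsto_gaussPDF_atTop.div_atTop tendsto_birnbaumBound_atTop)
  exact sub_nonneg.1 (h_antitone.le_of_tendsto h_lim x)

theorem one_sub_Phi_nonneg (x : ℝ) : 0 ≤ 1 - Phi x :=
  (div_nonneg (gaussPDF_nonneg x) (birnbaumBound_pos x).le).trans
    (gaussPDF_div_birnbaumBound_le_one_sub_Phi x)

theorem gaussPDF_le_birnbaumBound_mul_one_sub_Phi {a x : ℝ} (hxa : x ≤ a) :
    gaussPDF x ≤ birnbaumBound a * (1 - Phi x) :=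
  calc gaussPDF x ≤ birnbaumBound x * (1 - Phi x) :=
        (div_le_iff₀' (birnbaumBound_pos x)).1 (gaussPDF_div_birnbaumBound_le_one_sub_Phi x)
    _ ≤ birnbaumBound a * (1 - Phi x) :=
        mul_le_mul_of_nonneg_right (monotone_birnbaumBound hxa) (one_sub_Phi_nonneg x)

theorem one_sub_Phi_le_mul_exp {a b : ℝ} (hba : b ≤ a) :
    1 - Phi b ≤ (1 - Phi a) * Real.exp (birnbaumBound a * (a - b)) := by
  have h_mono : MonotoneOn (fun x ↦ (1 - Phi x) * Real.exp (birnbaumBound a * x)) (Iic a) :=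
    monotoneOn_mul_exp_of_hasDerivAt (convex_Iic a) (fun x _ ↦ (hasDerivAt_Phi x).const_sub 1)
      fun x hx ↦ by linarith [gaussPDF_le_birnbaumBound_mul_one_sub_Phi (mem_Iic.1 hx)]
  rw [mul_sub, Real.exp_sub, ← mul_div_assoc, le_div_iff₀ (Real.exp_pos _)]
  exact h_mono hba self_mem_Iic hba

theorem stmt0_general (a γ : ℝ) (ha : √2 / 2 ≤ a) (hγ : 0 ≤ γ) :
    1 - Phi (a / (1 + γ)) ≤ (1 - Phi a) * Real.exp (2 * a ^ 2 * γ) := by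
  have ha_nonneg : 0 ≤ a := le_trans (by positivity) ha
  have h_le : a / (1 + γ) ≤ a := div_le_self ha_nonneg (by linarith)
  have h_gap : a - a / (1 + γ) ≤ a * γ := by
    calc a - a / (1 + γ) = a * γ / (1 + γ) := by field_simp; ring
      _ ≤ a * γ := div_le_self (by positivity) (by linarith)
  have h_exponent : birnbaumBound a * (a - a / (1 + γ)) ≤ 2 * a ^ 2 * γ := by
    calc birnbaumBound a * (a - a / (1 + γ)) ≤ 2 * a * (a * γ) :=
          mul_le_mul (birnbaumBound_le_two_mul ha) h_gap (sub_nonneg.2 h_le) (by positivity)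
      _ = 2 * a ^ 2 * γ := by ring
  exact (one_sub_Phi_le_mul_exp h_le).trans
    (mul_le_mul_of_nonneg_left (Real.exp_le_exp.2 h_exponent) (one_sub_Phi_nonneg a))

theorem stmt0 (a γ : ℝ) (ha : 1 ≤ a) (hγ : 0 < γ) :
    1 - Phi (a / (1 + γ)) ≤ (1 - Phi a) * Real.exp (2 * a ^ 2 * γ) := by
  have h_sqrt : √2 ≤ 2 := Real.sqrt_le_iff.2 (by norm_num)
  exact stmt0_general a γ (by linarith) hγ.le
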